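/- Let γ ∈ (0, 1) and β ≥ 0. Define the modified squared loss φ(α) := 1 for α ≤ 0, φ(α) := (1 − α)² for 0 < α ≤ 1, and φ(α) := 0 for α > 1, and its shift φ_β(α) := φ(α − β). Then φ_β is (φ_γ, [−1, 1])-calibrated if and only if β < 1. -/

import Mathlib

/-- Class-conditional risk of a margin-based loss `φ`:
`C_φ(α, η) = η φ(α) + (1 - η) φ(-α)`. -/
noncomputable def ccr (φ : ℝ → ℝ) (α η : ℝ) : ℝ := η * φ α + (1 - η) * φ (-α)

/-- Minimal class-conditional risk over a set `A` of achievable prediction values. -/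
noncomputable def ccrStar (φ : ℝ → ℝ) (A : Set ℝ) (η : ℝ) : ℝ :=
  sInf ((fun α => ccr φ α η) '' A)

/-- Excess class-conditional risk. -/
noncomputable def ccrExcess (φ : ℝ → ℝ) (A : Set ℝ) (α η : ℝ) : ℝ :=
  ccr φ α η - ccrStar φ A η

/-- `φ` is `(ψ, A)`-calibrated. -/
def Calibrated (φ ψ : ℝ → ℝ) (A : Set ℝ) : Prop :=
  ∀ ε > (0:ℝ), ∃ δ > (0:ℝ), ∀ η ∈ Set.Icc (0:ℝ) 1, ∀ α ∈ A,
    ccr φ α η < ccrStar φ A η + δ → ccr ψ α η < ccrStar ψ A η + ε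

/-- The `γ`-robust 0-1 loss `φ_γ(α) = 1{α ≤ γ}` (the 0-1 loss is the case `γ = 0`). -/
noncomputable def robustLoss (γ : ℝ) (α : ℝ) : ℝ := if α ≤ γ then 1 else 0

/-- Quasiconcavity of a real function on ℝ. -/
def QuasiconcaveFn (h : ℝ → ℝ) : Prop :=
  ∀ α₁ α₂ l : ℝ, 0 ≤ l → l ≤ 1 → min (h α₁) (h α₂) ≤ h (l * α₁ + (1 - l) * α₂)

/-- `φ` is quasiconcave even if its even part `α ↦ φ(α) + φ(-α)` is quasiconcave. -/
def QuasiconcaveEven (φ : ℝ → ℝ) : Prop := QuasiconcaveFn (fun α => φ α + φ (-α))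

/-- The modified squared loss: `1` for `α ≤ 0`, `(1-α)²` for `0 < α ≤ 1`, `0` for `α > 1`. -/
noncomputable def modSq (α : ℝ) : ℝ := if α ≤ 0 then 1 else if α ≤ 1 then (1 - α)^2 else 0

/-!
Write `C_φ(α, η) = E(α) / 2 - (η - 1/2) D(α)` with `E(α) = φ(α) + φ(-α)` even and
`D(α) = φ(-α) - φ(α)` odd. If `φ` is nonincreasing on `[-r, r]` and `E` is nonincreasing on
`[0, r]`, then `|D| ≤ D(r)` and `E ≥ E(r)`, so the minimal risk is `E(r) / 2 - |η - 1/2| D(r)`,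
attained at `r` or `-r`. The robust 0-1 loss has the same shape. Hence for `|α| ≤ γ` the excess
`φ`-risk is at least `(E(γ) - E(r)) / 2`, while for `|α| > γ` it dominates the excess robust risk
up to the factor `D(r) / 2`; so `E(r) < E(γ)` suffices for calibration. It is also necessary, since
otherwise `γ` minimizes the `φ`-risk at `η = 1/2`, but not the robust risk. For the modified squared
loss shifted by `β ≥ 0`, `φ(-α) = 1` when `α ≥ 0`, so the criterion becomes `φ(r) < φ(γ)`.
-/

open Set

open scoped Pointwise

/-- Twice the even part of `φ`, the function in the definition of `QuasiconcaveEven`. Being even,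
it is quasiconcave exactly when it is nonincreasing on `[0, ∞)`. -/
def evenSum (φ : ℝ → ℝ) (α : ℝ) : ℝ := φ α + φ (-α)

/-- Twice the odd part of `φ`, up to sign: the loss added by getting the sign of the margin `α`
wrong. The sign is chosen to make it nonnegative on `[0, ∞)` for nonincreasing `φ`. -/
def signGap (φ : ℝ → ℝ) (α : ℝ) : ℝ := φ (-α) - φ α

section EvenOdd

variable {φ : ℝ → ℝ} {r γ α : ℝ}

theorem evenSum_neg (φ : ℝ → ℝ) (α : ℝ) : evenSum φ (-α) = evenSum φ α := by
  simp only [evenSum, neg_neg, add_comm]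

theorem evenSum_abs (φ : ℝ → ℝ) (α : ℝ) : evenSum φ |α| = evenSum φ α := by
  rcases abs_choice α with h | h <;> rw [h]
  exact evenSum_neg φ α

theorem signGap_neg (φ : ℝ → ℝ) (α : ℝ) : signGap φ (-α) = -signGap φ α := by
  simp only [signGap, neg_neg, neg_sub]

theorem evenSum_le_evenSum_of_abs_le (hE : AntitoneOn (evenSum φ) (Icc 0 r)) (hγ : γ ≤ r)
    (hα : |α| ≤ γ) : evenSum φ γ ≤ evenSum φ α := by
  have hα₀ := abs_nonneg α
  rw [← evenSum_abs φ α]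
  exact hE ⟨hα₀, hα.trans hγ⟩ ⟨hα₀.trans hα, hγ⟩ hα

theorem monotoneOn_signGap (hφ : AntitoneOn φ (Icc (-r) r)) :
    MonotoneOn (signGap φ) (Icc (-r) r) := fun _ hx _ hy hxy =>
  sub_le_sub (hφ ⟨neg_le_neg hy.2, neg_le.1 hy.1⟩ ⟨neg_le_neg hx.2, neg_le.1 hx.1⟩
    (neg_le_neg hxy)) (hφ hx hy hxy)

theorem abs_signGap_le (hφ : AntitoneOn φ (Icc (-r) r)) (hα : α ∈ Icc (-r) r) :
    |signGap φ α| ≤ signGap φ r := by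
  have hr : -r ≤ r := hα.1.trans hα.2
  have hD := monotoneOn_signGap hφ
  rw [abs_le, ← signGap_neg]
  exact ⟨hD (left_mem_Icc.2 hr) hα hα.1, hD hα (right_mem_Icc.2 hr) hα.2⟩

theorem signGap_nonneg (hφ : AntitoneOn φ (Icc (-r) r)) (hα₀ : 0 ≤ α) (hα : α ≤ r) :
    0 ≤ signGap φ α :=
  sub_nonneg.2 <| hφ ⟨neg_le_neg hα, by linarith⟩ ⟨by linarith, hα⟩ (by linarith)

theorem signGap_pos_of_evenSum_lt (hφ : AntitoneOn φ (Icc (-r) r)) (hα : α ∈ Icc (-r) r)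
    (h : evenSum φ r < evenSum φ α) : 0 < signGap φ r := by
  have hr : -r ∈ Icc (-r) r := left_mem_Icc.2 (hα.1.trans hα.2)
  have hα_le : φ α ≤ φ (-r) := hφ hr hα hα.1
  have hneg_le : φ (-α) ≤ φ (-r) :=
    hφ hr ⟨neg_le_neg hα.2, neg_le.1 hα.1⟩ (neg_le_neg hα.2)
  unfold evenSum at h
  unfold signGap
  linarith

theorem mul_signGap_le_abs_mul (hφ : AntitoneOn φ (Icc (-r) r)) (hα : α ∈ Icc (-r) r) (c : ℝ) :
    c * signGap φ α ≤ |c| * signGap φ r :=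
  calc c * signGap φ α ≤ |c| * |signGap φ α| := (le_abs_self _).trans_eq (abs_mul _ _)
    _ ≤ |c| * signGap φ r := by gcongr; exact abs_signGap_le hφ hα

end EvenOdd

section Risk

variable {φ : ℝ → ℝ} {r γ α η : ℝ}

theorem ccr_eq_evenSum_sub_signGap (φ : ℝ → ℝ) (α η : ℝ) :
    ccr φ α η = evenSum φ α / 2 - (η - 1 / 2) * signGap φ α := by
  unfold ccr evenSum signGap
  ring

theorem ccr_neg (φ : ℝ → ℝ) (α η : ℝ) : ccr φ (-α) η = ccr φ α (1 - η) := by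
  unfold ccr
  rw [neg_neg]
  ring

theorem ccrStar_one_sub (φ : ℝ → ℝ) {A : Set ℝ} (hA : -A = A) (η : ℝ) :
    ccrStar φ A (1 - η) = ccrStar φ A η := by
  simp only [ccrStar, ← ccr_neg]
  conv_rhs => rw [← hA, ← image_neg_eq_neg, image_image]

theorem ccrExcess_neg (φ : ℝ → ℝ) {A : Set ℝ} (hA : -A = A) (α η : ℝ) :
    ccrExcess φ A (-α) η = ccrExcess φ A α (1 - η) := by
  rw [ccrExcess, ccrExcess, ccr_neg, ccrStar_one_sub φ hA]

theorem calibrated_iff_ccrExcess {ψ : ℝ → ℝ} {A : Set ℝ} :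
    Calibrated φ ψ A ↔ ∀ ε > 0, ∃ δ > 0, ∀ η ∈ Icc (0 : ℝ) 1, ∀ α ∈ A,
      ccrExcess φ A α η < δ → ccrExcess ψ A α η < ε := by
  simp only [Calibrated, ccrExcess, sub_lt_iff_lt_add']

theorem ccrStar_Icc (hr : 0 ≤ r) (hφ : AntitoneOn φ (Icc (-r) r))
    (hE : AntitoneOn (evenSum φ) (Icc 0 r)) (η : ℝ) :
    ccrStar φ (Icc (-r) r) η = evenSum φ r / 2 - |η - 1 / 2| * signGap φ r := by
  refine IsLeast.csInf_eq ⟨?_, ?_⟩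
  · rcases abs_choice (η - 1 / 2) with h | h
    · exact ⟨r, ⟨by linarith, le_rfl⟩, by simp only [ccr_eq_evenSum_sub_signGap, h]⟩
    · refine ⟨-r, ⟨le_rfl, by linarith⟩, ?_⟩
      simp only [ccr_eq_evenSum_sub_signGap, evenSum_neg, signGap_neg, h]
      ring
  · rintro _ ⟨α, hα, rfl⟩
    have hEα : evenSum φ r ≤ evenSum φ α :=
      evenSum_le_evenSum_of_abs_le hE le_rfl (abs_le.2 hα)
    have hDα := mul_signGap_le_abs_mul hφ hα (η - 1 / 2)
    simp only [ccr_eq_evenSum_sub_signGap]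
    linarith

theorem ccrExcess_Icc (hr : 0 ≤ r) (hφ : AntitoneOn φ (Icc (-r) r))
    (hE : AntitoneOn (evenSum φ) (Icc 0 r)) (α η : ℝ) :
    ccrExcess φ (Icc (-r) r) α η = (evenSum φ α - evenSum φ r) / 2 +
      (|η - 1 / 2| * signGap φ r - (η - 1 / 2) * signGap φ α) := by
  rw [ccrExcess, ccr_eq_evenSum_sub_signGap, ccrStar_Icc hr hφ hE]
  ring

theorem half_evenSum_sub_le_ccrExcess (hφ : AntitoneOn φ (Icc (-r) r))
    (hE : AntitoneOn (evenSum φ) (Icc 0 r)) (hγ : γ ≤ r) (hα : |α| ≤ γ) (η : ℝ) :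
    (evenSum φ γ - evenSum φ r) / 2 ≤ ccrExcess φ (Icc (-r) r) α η := by
  have hr : 0 ≤ r := (abs_nonneg α).trans (hα.trans hγ)
  have hEα : evenSum φ γ ≤ evenSum φ α := evenSum_le_evenSum_of_abs_le hE hγ hα
  have hDα : (η - 1 / 2) * signGap φ α ≤ |η - 1 / 2| * signGap φ r :=
    mul_signGap_le_abs_mul hφ (abs_le.1 (hα.trans hγ)) _
  rw [ccrExcess_Icc hr hφ hE]
  linarith

end Risk

section RobustLoss

variable {φ : ℝ → ℝ} {r γ α η : ℝ}

theorem robustLoss_of_le (h : α ≤ γ) : robustLoss γ α = 1 := if_pos h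

theorem robustLoss_of_lt (h : γ < α) : robustLoss γ α = 0 := if_neg h.not_ge

theorem antitone_robustLoss (γ : ℝ) : Antitone (robustLoss γ) := by
  intro x y hxy
  unfold robustLoss
  split_ifs <;> linarith

theorem antitoneOn_evenSum_robustLoss (hγ : 0 ≤ γ) :
    AntitoneOn (evenSum (robustLoss γ)) (Ici 0) := by
  intro x (hx : 0 ≤ x) y (hy : 0 ≤ y) hxy
  simp only [evenSum, robustLoss_of_le (show -x ≤ γ by linarith),
    robustLoss_of_le (show -y ≤ γ by linarith)]
  gcongr
  exact antitone_robustLoss γ hxy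

theorem ccrExcess_robustLoss (hγ : 0 ≤ γ) (hγr : γ < r) (α η : ℝ) :
    ccrExcess (robustLoss γ) (Icc (-r) r) α η = (evenSum (robustLoss γ) α - 1) / 2 +
      (|η - 1 / 2| - (η - 1 / 2) * signGap (robustLoss γ) α) := by
  rw [ccrExcess_Icc (hγ.trans hγr.le) ((antitone_robustLoss γ).antitoneOn _)
    ((antitoneOn_evenSum_robustLoss hγ).mono Icc_subset_Ici_self)]
  have hr : evenSum (robustLoss γ) r = 1 ∧ signGap (robustLoss γ) r = 1 := by
    simp [evenSum, signGap, robustLoss_of_lt hγr, robustLoss_of_le (show -r ≤ γ by linarith)]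
  rw [hr.1, hr.2, mul_one]

theorem ccrExcess_robustLoss_of_lt (hγ : 0 ≤ γ) (hγr : γ < r) (hα : γ < α) (η : ℝ) :
    ccrExcess (robustLoss γ) (Icc (-r) r) α η = |η - 1 / 2| - (η - 1 / 2) := by
  simp [ccrExcess_robustLoss hγ hγr, evenSum, signGap, robustLoss_of_lt hα,
    robustLoss_of_le (show -α ≤ γ by linarith)]

theorem ccrExcess_robustLoss_self_half (hγ : 0 ≤ γ) (hγr : γ < r) :
    ccrExcess (robustLoss γ) (Icc (-r) r) γ (1 / 2) = 1 / 2 := by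
  rw [ccrExcess_robustLoss hγ hγr, evenSum, robustLoss_of_le le_rfl,
    robustLoss_of_le (neg_le_self hγ), sub_self, abs_zero]
  norm_num

theorem ccrExcess_robustLoss_mul_signGap_le (hφ : AntitoneOn φ (Icc (-r) r))
    (hE : AntitoneOn (evenSum φ) (Icc 0 r)) (hγ : 0 ≤ γ) (hγr : γ < r)
    (hα : α ∈ Icc (-r) r) (hγα : γ < |α|) (η : ℝ) :
    ccrExcess (robustLoss γ) (Icc (-r) r) α η * signGap φ r ≤
      2 * ccrExcess φ (Icc (-r) r) α η := by
  wlog hα_pos : γ < α generalizing α η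
  · have hα_neg : γ < -α := (lt_abs.1 hγα).resolve_left hα_pos
    have hsymm : -Icc (-r) r = Icc (-r) r := by rw [neg_Icc, neg_neg]
    have := this (α := -α) ⟨neg_le_neg hα.2, neg_le.1 hα.1⟩ (by rwa [abs_neg]) (1 - η) hα_neg
    simpa only [ccrExcess_neg _ hsymm, sub_sub_cancel] using this
  have hEα : evenSum φ r ≤ evenSum φ α := evenSum_le_evenSum_of_abs_le hE le_rfl (abs_le.2 hα)
  have hDα₀ : 0 ≤ signGap φ α := signGap_nonneg hφ (hγ.trans hα_pos.le) hα.2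
  have hDα : signGap φ α ≤ signGap φ r := (le_abs_self _).trans (abs_signGap_le hφ hα)
  rw [ccrExcess_robustLoss_of_lt hγ hγr hα_pos, ccrExcess_Icc (hγ.trans hγr.le) hφ hE]
  rcases le_total 0 (η - 1 / 2) with hη | hη
  · rw [abs_of_nonneg hη]
    linarith [mul_le_mul_of_nonneg_left hDα hη]
  · rw [abs_of_nonpos hη]
    linarith [mul_nonpos_of_nonpos_of_nonneg hη hDα₀]

theorem calibrated_robustLoss_of_evenSum_lt (hφ : AntitoneOn φ (Icc (-r) r))
    (hE : AntitoneOn (evenSum φ) (Icc 0 r)) (hγ : 0 ≤ γ) (hγr : γ < r)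
    (h : evenSum φ r < evenSum φ γ) : Calibrated φ (robustLoss γ) (Icc (-r) r) := by
  have hD : 0 < signGap φ r := signGap_pos_of_evenSum_lt hφ ⟨by linarith, hγr.le⟩ h
  refine calibrated_iff_ccrExcess.2 fun ε hε =>
    ⟨min ((evenSum φ γ - evenSum φ r) / 2) (ε * signGap φ r / 2),
      lt_min (half_pos (sub_pos.2 h)) (by positivity), fun η _ α hα hδ => ?_⟩
  obtain ⟨hδ_even, hδ_gap⟩ := lt_min_iff.1 hδ
  have hγα : γ < |α| := by
    by_contra! hα_le
    exact (half_evenSum_sub_le_ccrExcess hφ hE hγr.le hα_le η).not_gt hδ_even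
  have hle := ccrExcess_robustLoss_mul_signGap_le hφ hE hγ hγr hα hγα η
  exact lt_of_mul_lt_mul_right (by linarith) hD.le

theorem evenSum_lt_of_calibrated_robustLoss (hφ : AntitoneOn φ (Icc (-r) r))
    (hE : AntitoneOn (evenSum φ) (Icc 0 r)) (hγ : 0 ≤ γ) (hγr : γ < r)
    (h : Calibrated φ (robustLoss γ) (Icc (-r) r)) : evenSum φ r < evenSum φ γ := by
  by_contra! hle
  obtain ⟨δ, hδ, H⟩ := calibrated_iff_ccrExcess.1 h (1 / 2) one_half_pos
  have hφ_excess : ccrExcess φ (Icc (-r) r) γ (1 / 2) < δ := by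
    rw [ccrExcess_Icc (hγ.trans hγr.le) hφ hE, sub_self, abs_zero]
    linarith
  exact (H (1 / 2) (by norm_num) γ ⟨by linarith, hγr.le⟩ hφ_excess).ne
    (ccrExcess_robustLoss_self_half hγ hγr)

theorem calibrated_robustLoss_iff (hφ : AntitoneOn φ (Icc (-r) r))
    (hE : AntitoneOn (evenSum φ) (Icc 0 r)) (hγ : 0 ≤ γ) (hγr : γ < r) :
    Calibrated φ (robustLoss γ) (Icc (-r) r) ↔ evenSum φ r < evenSum φ γ :=
  ⟨evenSum_lt_of_calibrated_robustLoss hφ hE hγ hγr,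
    calibrated_robustLoss_of_evenSum_lt hφ hE hγ hγr⟩

end RobustLoss

section ModSq

variable {x y β : ℝ}

theorem modSq_of_nonpos (hx : x ≤ 0) : modSq x = 1 := if_pos hx

theorem modSq_of_one_le (hx : 1 ≤ x) : modSq x = 0 := by
  unfold modSq
  split_ifs <;> nlinarith

theorem antitone_modSq : Antitone modSq := by
  intro x y hxy
  unfold modSq
  split_ifs <;> nlinarith

theorem modSq_lt_modSq_iff (hxy : x < y) : modSq y < modSq x ↔ 0 < y ∧ x < 1 := by
  refine ⟨fun h => ⟨?_, ?_⟩, fun ⟨hy, hx⟩ => ?_⟩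
  · by_contra! hy
    exact h.ne (by rw [modSq_of_nonpos hy, modSq_of_nonpos (hxy.le.trans hy)])
  · by_contra! hx
    exact h.ne (by rw [modSq_of_one_le hx, modSq_of_one_le (hx.trans hxy.le)])
  · unfold modSq
    split_ifs <;> nlinarith [hy, hx]

theorem evenSum_modSq_sub (hβ : 0 ≤ β) (hx : 0 ≤ x) :
    evenSum (fun α => modSq (α - β)) x = modSq (x - β) + 1 := by
  rw [evenSum, modSq_of_nonpos (show -x - β ≤ 0 by linarith)]

theorem antitone_modSq_sub (β : ℝ) : Antitone fun α => modSq (α - β) :=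
  antitone_modSq.comp_monotone fun _ _ h => sub_le_sub_right h β

theorem antitoneOn_evenSum_modSq_sub (hβ : 0 ≤ β) :
    AntitoneOn (evenSum fun α => modSq (α - β)) (Ici 0) := by
  intro x hx y hy hxy
  rw [evenSum_modSq_sub hβ hx, evenSum_modSq_sub hβ hy]
  gcongr
  exact antitone_modSq_sub β hxy

theorem modSq_calibrated_iff_general {r γ β : ℝ} (hγ : 0 ≤ γ) (hγr : γ < r) (hβ : 0 ≤ β) :
    Calibrated (fun α => modSq (α - β)) (robustLoss γ) (Icc (-r) r) ↔ β < r ∧ γ < 1 + β := by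
  rw [calibrated_robustLoss_iff ((antitone_modSq_sub β).antitoneOn _)
      ((antitoneOn_evenSum_modSq_sub hβ).mono Icc_subset_Ici_self) hγ hγr,
    evenSum_modSq_sub hβ (hγ.trans hγr.le), evenSum_modSq_sub hβ hγ, add_lt_add_iff_right,
    modSq_lt_modSq_iff (sub_lt_sub_right hγr β), sub_pos, sub_lt_iff_lt_add]

end ModSq

/-- The shifted modified squared loss is `(φ_γ, [-1,1])`-calibrated iff `β < 1`
(for shifts `β ≥ 0`). -/
theorem modSq_calibrated_iff
    (γ : ℝ) (hγ : γ ∈ Set.Ioo (0:ℝ) 1) (β : ℝ) (hβ : 0 ≤ β) :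
    Calibrated (fun α => modSq (α - β)) (robustLoss γ) (Set.Icc (-1:ℝ) 1) ↔ β < 1 :=
  (modSq_calibrated_iff_general hγ.1.le hγ.2 hβ).trans
    (and_iff_left (lt_add_of_lt_of_nonneg hγ.2 hβ))
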